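/- Let (R, m) be an equidimensional Noetherian local ring of dimension two which is an image of a Cohen-Macaulay local ring, and let x, y be a system of parameters of R. Then (x, y)^lim is contained in the integral closure of the ideal (x, y). -/

import Mathlib

/-!
Write `R = A / J` with `A` Cohen–Macaulay. Integrality over `(x, y)` may be tested modulo each
minimal prime `p` of `R`: if for every `p` there is a polynomial `q` of the shape required of an
equation of integral dependence with `q(r) ∈ p`, then the product of these finitely many
polynomials takes a nilpotent value at `r`, and a power of it vanishes there
(`isIntegralOverIdeal_of_minimalPrimes`).

Fix `p`, and let `P` be its preimage in `A`; equidimensionality gives `dim A / P = 2`. Divide `A`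
successively by regular elements contained in `P`, as long as `P` is not an associated prime. Each
step lowers the depth and the dimension by exactly one, so the end result is a finitely generated
module `M` of depth at least two with `P` associated to `M` (`exists_depth_two_module`). This uses
the Rees theorem for the depth, and the bound of the depth by the dimension of every associated
prime (`HasDepthGE.le_ringKrullDim_quotient`).

Let `N` be the submodule of `M` of elements killed by `P`. It is torsion-free over `A / P`, again
by that bound, and `x ^ i, y ^ j` behave like a regular sequence on it, a property inherited from a
regular sequence `u, v` on `M` because powers of `u` and `v` lie in `(x ^ i, y ^ j) + P`
(`exists_eq_pow_smul_of_sop`). Hence `(x y) ^ n r ∈ (x ^ (n + 1), y ^ (n + 1)) + P` implies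
`r N ⊆ (x, y) N` (`smul_mem_of_limit`). The determinant trick then yields a polynomial `q` with the
required coefficients such that `q(r)` annihilates `N`; as `N` has an element with annihilator `P`,
this means `q(r) ∈ P` (`exists_isIntegralPoly_eval_mem`).
-/

open IsLocalRing

/-- The limit closure `(x)^lim = ⋃_{n>0} ((x₁^{n+1}, …, x_r^{n+1}) :_R (x₁⋯x_r)^n)` of a
sequence `x = x₁, …, x_r` of elements of `R`; the union of the increasing family of ideals
is expressed as a supremum. -/
def limitClosure {R : Type*} [CommRing R] {M : Type*} [AddCommGroup M] [Module R M]
    {r : ℕ} (x : Fin r → R) : Submodule R M :=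
  ⨆ n : ℕ, (Ideal.span (Set.range fun i => x i ^ (n + 2)) • (⊤ : Submodule R M)).comap
    (LinearMap.lsmul R M ((∏ i, x i) ^ (n + 1)))

/-- A system of parameters of a Noetherian local ring `R` of dimension `t`: a sequence of `t`
elements of the maximal ideal generating an ideal primary to the maximal ideal. -/
def IsSOP (R : Type*) [CommRing R] [IsLocalRing R] {t : ℕ} (x : Fin t → R) : Prop :=
  (∀ i, x i ∈ maximalIdeal R) ∧ (Ideal.span (Set.range x)).radical = maximalIdeal R

/-- A ring is equidimensional if `dim R/p = dim R` for every minimal prime `p`. -/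
def IsEquidimensionalRing (R : Type*) [CommRing R] : Prop :=
  ∀ p ∈ minimalPrimes R, ringKrullDim (R ⧸ p) = ringKrullDim R

/-- A (Noetherian, local) ring is Cohen–Macaulay if it admits a regular sequence whose length
equals its Krull dimension. -/
def IsCohenMacaulayRing (A : Type*) [CommRing A] : Prop :=
  ∃ rs : List A, RingTheory.Sequence.IsRegular A rs ∧
    (rs.length : WithBot ℕ∞) = ringKrullDim A

/-- An element `r` is integral over an ideal `I` if it satisfies an equation
`r^n + a₁ r^{n-1} + ⋯ + a_n = 0` with `aᵢ ∈ Iⁱ`. -/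
def IsIntegralOverIdeal {R : Type*} [CommRing R] (I : Ideal R) (r : R) : Prop :=
  ∃ n : ℕ, 0 < n ∧ ∃ a : ℕ → R, (∀ i, 1 ≤ i → i ≤ n → a i ∈ I ^ i) ∧
    r ^ n + ∑ i ∈ Finset.Icc 1 n, a i * r ^ (n - i) = 0

universe u

/-! ### Depth and associated primes -/

section Depth

open RingTheory.Sequence CategoryTheory Abelian Pointwise

/-- The module `M` over the local ring `A` has depth at least `n`, in the sense that the maximal
ideal contains an `M`-regular sequence of length `n`. -/
def HasDepthGE (A : Type u) [CommRing A] [IsLocalRing A] (n : ℕ) (M : Type u) [AddCommGroup M]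
    [Module A M] : Prop :=
  ∃ rs : List A, rs.length = n ∧ (∀ r ∈ rs, r ∈ maximalIdeal A) ∧ IsRegular M rs

theorem withBot_le_of_succ_le {a : WithBot ℕ∞} {n : ℕ}
    (h : a + 1 ≤ ((n + 1 : ℕ) : WithBot ℕ∞)) : a ≤ n := by
  induction a with
  | bot => exact bot_le
  | coe a =>
    have h' : a + 1 ≤ ((n + 1 : ℕ) : ℕ∞) := by exact_mod_cast h
    induction a with
    | top => simp at h'
    | coe a => norm_cast at h' ⊢; omega

theorem ringKrullDim_quotient_succ_le_of_lt {A : Type u} [CommRing A] {P Q : Ideal A}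
    [P.IsPrime] (h : P < Q) :
    ringKrullDim (A ⧸ Q) + 1 ≤ ringKrullDim (A ⧸ P) := by
  obtain ⟨hle, q, hqQ, hqP⟩ := SetLike.lt_iff_le_and_exists.mp h
  refine ringKrullDim_succ_le_of_surjective (Ideal.Quotient.factor hle)
    (Ideal.Quotient.factor_surjective hle) (r := Ideal.Quotient.mk P q) ?_ ?_
  · rw [mem_nonZeroDivisors_iff_ne_zero]
    simpa [Ideal.Quotient.eq_zero_iff_mem] using hqP
  · simpa [Ideal.Quotient.eq_zero_iff_mem] using hqQ

theorem ringKrullDim_quotient_le_supportDim {A : Type u} [CommRing A] {M : Type u} [AddCommGroup M]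
    [Module A M] [Module.Finite A M] {P : Ideal A} [hPp : P.IsPrime]
    (hP : ⟨P, hPp⟩ ∈ Module.support A M) :
    ringKrullDim (A ⧸ P) ≤ Module.supportDim A M := by
  rw [Module.supportDim_eq_ringKrullDim_quotient_annihilator]
  have hle := Module.annihilator_le_of_mem_support hP
  exact ringKrullDim_le_of_surjective (Ideal.Quotient.factor hle)
    (Ideal.Quotient.factor_surjective hle)

variable {A : Type u} [CommRing A] [IsLocalRing A]

theorem maximalIdeal_smul_top_lt_top (M : Type u) [AddCommGroup M] [Module A M]
    [Module.Finite A M] [Nontrivial M] :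
    maximalIdeal A • (⊤ : Submodule A M) < ⊤ :=
  (Submodule.top_ne_ideal_smul_of_le_jacobson_annihilator
    (IsLocalRing.maximalIdeal_le_jacobson _)).symm.lt_top

theorem HasDepthGE.exists_regular_pair {n : ℕ} {M : Type u} [AddCommGroup M] [Module A M]
    (h : HasDepthGE A (n + 2) M) :
    ∃ u ∈ maximalIdeal A, ∃ v ∈ maximalIdeal A, IsSMulRegular M u ∧
      IsSMulRegular (QuotSMulTop u M) v := by
  obtain ⟨rs, len, mem, reg⟩ := h
  match rs with
  | [] => simp at len
  | [_] => simp at len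
  | u :: v :: rs' =>
    rw [isRegular_cons_iff, isRegular_cons_iff] at reg
    exact ⟨u, mem u (by simp), v, mem v (by simp), reg.1, reg.2.1⟩

variable [IsNoetherianRing A]

/-- Depth drops by at most one on dividing out any regular element: by the Rees theorem depth is
detected by the vanishing of `Ext` out of the residue field. -/
theorem HasDepthGE.quotSMulTop {n : ℕ} {M : Type u} [AddCommGroup M] [Module A M]
    [Module.Finite A M] (h : HasDepthGE A (n + 1) M) {z : A} (hz : z ∈ maximalIdeal A)
    (hreg : IsSMulRegular M z) : HasDepthGE A n (QuotSMulTop z M) := by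
  obtain ⟨rs, len, mem, reg⟩ := h
  have : Nontrivial M := reg.nontrivial
  have : Nontrivial (QuotSMulTop z M) := nontrivial_quotSMulTop_of_mem_maximalIdeal _ hz
  let N : ModuleCat.{u} A := ModuleCat.of A (A ⧸ maximalIdeal A)
  have hN : Module.support A N = PrimeSpectrum.zeroLocus (maximalIdeal A) := by
    rw [Module.support_eq_zeroLocus]
    simp only [N]
    rw [Ideal.annihilator_quotient]
  have h_ext := ModuleCat.subsingleton_ext_of_exists_isRegular (maximalIdeal A) N hN.subset
    (ModuleCat.of A M) (maximalIdeal_smul_top_lt_top M) rs mem reg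
  refine ModuleCat.exists_isRegular_of_exists_subsingleton_ext (maximalIdeal A) n
    (ModuleCat.of A (QuotSMulTop z M)) (maximalIdeal_smul_top_lt_top _) N hN fun i hi => ?_
  have zero1 := AddCommGrpCat.isZero_of_iff_subsingleton.mpr (h_ext i (by omega))
  have zero2 := AddCommGrpCat.isZero_of_iff_subsingleton.mpr (h_ext (i + 1) (by omega))
  exact AddCommGrpCat.subsingleton_of_isZero <| ShortComplex.Exact.isZero_of_both_zeros
    ((Ext.covariant_sequence_exact₃' N
      (IsSMulRegular.smulShortComplex_shortExact (M := ModuleCat.of A M) hreg)) i (i + 1) rfl)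
    (zero1.eq_zero_of_src _) (zero2.eq_zero_of_tgt _)

/-- If `P` is associated to `M` and `x` is `M`-regular, then some associated prime of `M / xM`
contains both `P` and `x`. The submodule `N` of elements killed by `P` satisfies
`N ∩ xM = xN`, so by Nakayama it is not contained in `xM`. -/
theorem exists_isAssociatedPrime_quotSMulTop {M : Type u} [AddCommGroup M] [Module A M]
    [Module.Finite A M] {P : Ideal A} (hP : IsAssociatedPrime P M) {x : A}
    (hx : x ∈ maximalIdeal A) (hreg : IsSMulRegular M x) :
    ∃ Q : Ideal A, IsAssociatedPrime Q (QuotSMulTop x M) ∧ P < Q := by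
  obtain ⟨hPp, c, hc⟩ := isAssociatedPrime_iff.mp hP
  have hc0 : c ≠ 0 := by
    rintro rfl
    exact hPp.ne_top (by simp [hc])
  let N : Submodule A M := Submodule.torsionBySet A M P
  have hcN : c ∈ N := by
    rw [Submodule.mem_torsionBySet_iff]
    rintro ⟨a, ha⟩
    have : a ∈ (⊥ : Submodule A M).colon {c} := hc ▸ ha
    simpa [Submodule.mem_colon_singleton] using this
  have hex : ∃ e ∈ N, e ∉ x • (⊤ : Submodule A M) := by
    by_contra! hcon
    have hle : N ≤ maximalIdeal A • N := by
      intro e he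
      obtain ⟨e', -, rfl⟩ := (Submodule.mem_smul_pointwise_iff_exists _ _ _).mp (hcon e he)
      refine Submodule.smul_mem_smul hx ?_
      rw [Submodule.mem_torsionBySet_iff] at he ⊢
      intro a
      refine hreg.right_eq_zero_of_smul ?_
      rw [smul_comm]
      exact he a
    have hbot := Submodule.eq_bot_of_le_smul_of_le_jacobson_bot (maximalIdeal A) N
      (IsNoetherian.noetherian N) hle (IsLocalRing.maximalIdeal_le_jacobson _)
    rw [hbot] at hcN
    exact hc0 (by simpa using hcN)
  obtain ⟨e, heN, hex⟩ := hex
  obtain ⟨Q, hQ, hle⟩ := exists_le_isAssociatedPrime_of_isNoetherianRing A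
    (Submodule.Quotient.mk e : QuotSMulTop x M)
    (by rwa [Ne, Submodule.Quotient.mk_eq_zero])
  refine ⟨Q, hQ, SetLike.lt_iff_le_and_exists.mpr ⟨fun a ha => hle ?_, x, hle ?_, ?_⟩⟩
  · rw [Submodule.mem_colon_singleton, ← Submodule.Quotient.mk_smul,
      (Submodule.mem_torsionBySet_iff _ _).mp heN ⟨a, ha⟩]
    simp
  · rw [Submodule.mem_colon_singleton, ← Submodule.Quotient.mk_smul, Submodule.mem_bot,
      Submodule.Quotient.mk_eq_zero]
    exact Submodule.smul_mem_pointwise_smul _ _ _ trivial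
  · intro hxP
    rw [hc, Submodule.mem_colon_singleton, Submodule.mem_bot] at hxP
    exact hc0 (hreg.right_eq_zero_of_smul hxP)

/-- Depth is bounded by the dimension of every associated prime. -/
theorem HasDepthGE.le_ringKrullDim_quotient {n : ℕ} {M : Type u} [AddCommGroup M] [Module A M]
    [Module.Finite A M] (h : HasDepthGE A n M) {P : Ideal A} (hP : IsAssociatedPrime P M) :
    (n : WithBot ℕ∞) ≤ ringKrullDim (A ⧸ P) := by
  induction n generalizing M P with
  | zero =>
    have := Ideal.Quotient.nontrivial_iff.mpr hP.isPrime.ne_top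
    simpa using ringKrullDim_nonneg_of_nontrivial
  | succ n ih =>
    obtain ⟨rs, len, mem, reg⟩ := h
    match rs with
    | [] => simp at len
    | x :: rs' =>
      rw [isRegular_cons_iff] at reg
      obtain ⟨Q, hQ, hlt⟩ := exists_isAssociatedPrime_quotSMulTop hP (mem x (by simp)) reg.1
      have := ih ⟨rs', by simpa using len, fun r hr => mem r (by simp [hr]), reg.2⟩ hQ
      have hPp := hP.isPrime
      push_cast
      exact le_trans (by gcongr) (ringKrullDim_quotient_succ_le_of_lt hlt)

/-- A prime `P` of dimension two in the support of a module whose depth equals its dimension is an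
associated prime of a module of depth at least two: regular elements contained in `P` are divided
out until `P` becomes associated. -/
theorem exists_depth_two_module (n : ℕ) (M : Type u) [AddCommGroup M] [Module A M]
    [Module.Finite A M] (h : HasDepthGE A n M) (hdim : Module.supportDim A M ≤ n)
    (P : Ideal A) [hPp : P.IsPrime] (hP : ⟨P, hPp⟩ ∈ Module.support A M)
    (hP2 : ringKrullDim (A ⧸ P) = 2) :
    ∃ (k : ℕ) (M' : Type u) (_ : AddCommGroup M') (_ : Module A M'), Module.Finite A M' ∧
      HasDepthGE A (k + 2) M' ∧ IsAssociatedPrime P M' := by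
  have hn : (2 : WithBot ℕ∞) ≤ n :=
    hP2 ▸ (ringKrullDim_quotient_le_supportDim hP).trans hdim
  induction n generalizing M with
  | zero => norm_cast at hn
  | succ n ih =>
    by_cases hass : IsAssociatedPrime P M
    · have hn' : 2 ≤ n + 1 := by exact_mod_cast hn
      obtain ⟨k, hk⟩ : ∃ k, n + 1 = k + 2 := ⟨n - 1, by omega⟩
      exact ⟨k, M, _, _, inferInstance, hk ▸ h, hass⟩
    -- otherwise `P` lies in an associated prime, strictly larger than `P`, whose dimension
    -- would be at most one, against the bound by the depth
    have hz : ∃ z ∈ P, IsSMulRegular M z := by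
      by_contra! hcon
      obtain ⟨Q, hQ, hle⟩ := (P.subset_union_prime_finite (associatedPrimes.finite A M) (f := id)
        0 0 fun _ h _ _ => h.1).1 (by
          simp_rw [id]
          rw [biUnion_associatedPrimes_eq_compl_regular]
          exact hcon)
      have hlt : P < Q := lt_of_le_of_ne hle (by rintro rfl; exact hass hQ)
      have h1 := ringKrullDim_quotient_succ_le_of_lt hlt
      have h2 := h.le_ringKrullDim_quotient hQ
      have h3 := hn.trans h2
      have h4 := h3.trans (withBot_le_of_succ_le (n := 1)
        (by rw [hP2] at h1; simpa [one_add_one_eq_two] using h1))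
      norm_cast at h4
    obtain ⟨z, hzP, hz⟩ := hz
    have hzm : z ∈ maximalIdeal A := IsLocalRing.le_maximalIdeal hPp.ne_top hzP
    have hdim' : Module.supportDim A (QuotSMulTop z M) ≤ n := by
      rw [← Module.supportDim_quotSMulTop_succ_eq_supportDim hz hzm] at hdim
      exact withBot_le_of_succ_le hdim
    have hP' : ⟨P, hPp⟩ ∈ Module.support A (QuotSMulTop z M) := by
      rw [Module.support_quotSMulTop]
      exact ⟨hP, by simpa using hzP⟩
    refine ih (QuotSMulTop z M) (h.quotSMulTop hzm hz) hdim' hP'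
      (hP2 ▸ (ringKrullDim_quotient_le_supportDim hP').trans hdim')

end Depth

/-! ### Regular pairs on the submodule killed by a prime -/

section Core

open Pointwise

variable {A : Type u} [CommRing A] {M : Type u} [AddCommGroup M] [Module A M]

/-- If `u, v` is a regular sequence on `M`, then `v ^ j` is regular on `M / u ^ i M`. -/
theorem exists_eq_pow_smul_of_regular_pair {u v : A} (hu : IsSMulRegular M u)
    (hv : IsSMulRegular (QuotSMulTop u M) v) (j : ℕ) (i : ℕ) {a b : M}
    (h : v ^ j • a = u ^ i • b) : ∃ a', a = u ^ i • a' := by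
  induction i generalizing a with
  | zero => exact ⟨a, by simp⟩
  | succ i ih =>
    have ha : a ∈ u • (⊤ : Submodule A M) := by
      refine mem_of_isSMulRegular_quotient_of_smul_mem (hv.pow j) ?_
      rw [h, pow_succ', mul_smul]
      exact Submodule.smul_mem_pointwise_smul _ _ _ trivial
    obtain ⟨a₁, -, rfl⟩ := (Submodule.mem_smul_pointwise_iff_exists _ _ _).mp ha
    obtain ⟨a', rfl⟩ := ih (a := a₁) (hu (by
      change u • v ^ j • a₁ = u • u ^ i • b
      rw [smul_comm, h, pow_succ', mul_smul]))
    exact ⟨a', by rw [pow_succ', mul_smul]⟩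

theorem eq_zero_of_pow_smul_eq_zero {N : Submodule A M} {x : A}
    (hx : ∀ e ∈ N, x • e = 0 → e = 0) (i : ℕ) (e : M) (he : e ∈ N) (h0 : x ^ i • e = 0) :
    e = 0 := by
  induction i generalizing e with
  | zero => simpa using h0
  | succ i ih =>
    rw [pow_succ, mul_smul] at h0
    exact hx e he (ih _ (N.smul_mem _ he) h0)

/-- The powers `x ^ i, y ^ j` behave like a regular sequence on the submodule of elements killed
by `P`: since `u ^ K` and `v ^ K` lie in `(x ^ i, y ^ j) + P`, the property is inherited from
the regular sequence `u, v`. -/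
theorem exists_eq_pow_smul_of_sop {u v : A} (hu : IsSMulRegular M u)
    (hv : IsSMulRegular (QuotSMulTop u M) v) {P : Ideal A} {x y : A}
    (hx : ∀ e ∈ Submodule.torsionBySet A M P, x • e = 0 → e = 0) (i j : ℕ)
    (hK : ∃ K, u ^ K ∈ Ideal.span {x ^ i, y ^ j} ⊔ P ∧ v ^ K ∈ Ideal.span {x ^ i, y ^ j} ⊔ P)
    {w w' : M} (hw : w ∈ Submodule.torsionBySet A M P)
    (hw' : w' ∈ Submodule.torsionBySet A M P) (h : x ^ i • w = y ^ j • w') :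
    ∃ w'' ∈ Submodule.torsionBySet A M P, w' = x ^ i • w'' := by
  have key : ∀ s ∈ Ideal.span {x ^ i, y ^ j} ⊔ P,
      ∃ g ∈ Submodule.torsionBySet A M P, s • w' = x ^ i • g := by
    intro s hs
    obtain ⟨t, ht, p, hp, rfl⟩ := Submodule.mem_sup.mp hs
    obtain ⟨α, β, rfl⟩ := Ideal.mem_span_pair.mp ht
    refine ⟨α • w' + β • w, Submodule.add_mem _ (Submodule.smul_mem _ _ hw')
      (Submodule.smul_mem _ _ hw), ?_⟩
    have hpw : p • w' = 0 := (Submodule.mem_torsionBySet_iff _ _).mp hw' ⟨p, hp⟩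
    rw [add_smul, hpw, add_zero, add_smul, mul_smul β, ← h]
    module
  obtain ⟨K, huK, hvK⟩ := hK
  -- by `key`, the multiples of the second element by powers of `u` and `v` are divisible by `x ^ i`
  obtain ⟨g, hg, hgu⟩ := key _ huK
  obtain ⟨g', hg', hgv⟩ := key _ hvK
  have hvg : v ^ K • g = u ^ K • g' := by
    rw [← sub_eq_zero]
    refine eq_zero_of_pow_smul_eq_zero hx i _ (Submodule.sub_mem _ (Submodule.smul_mem _ _ hg)
      (Submodule.smul_mem _ _ hg')) ?_
    rw [smul_sub, smul_comm, ← hgu, smul_comm (x ^ i), ← hgv, smul_comm, sub_self]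
  obtain ⟨w'', rfl⟩ := exists_eq_pow_smul_of_regular_pair hu hv K K hvg
  refine ⟨w'', ?_, ?_⟩
  · rw [Submodule.mem_torsionBySet_iff] at hg ⊢
    intro a
    refine (hu.pow K).right_eq_zero_of_smul ?_
    rw [smul_comm]
    exact hg a
  · refine hu.pow K ?_
    change u ^ K • w' = u ^ K • x ^ i • w''
    rw [hgu, smul_comm]

/-- An element of the limit closure modulo `P` multiplies the submodule `N` of elements
killed by `P` into `(x, y) N`. -/
theorem smul_mem_of_limit {u v : A} (hu : IsSMulRegular M u)
    (hv : IsSMulRegular (QuotSMulTop u M) v) {P : Ideal A} {x y : A}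
    (hx : ∀ e ∈ Submodule.torsionBySet A M P, x • e = 0 → e = 0)
    (hy : ∀ e ∈ Submodule.torsionBySet A M P, y • e = 0 → e = 0)
    (hK : ∀ i j, ∃ K, u ^ K ∈ Ideal.span {x ^ i, y ^ j} ⊔ P ∧
      v ^ K ∈ Ideal.span {x ^ i, y ^ j} ⊔ P)
    {r a b : A} {n : ℕ} (hr : (x * y) ^ n * r - (a * x ^ (n + 1) + b * y ^ (n + 1)) ∈ P)
    {e : M} (he : e ∈ Submodule.torsionBySet A M P) :
    ∃ e₁ ∈ Submodule.torsionBySet A M P, ∃ e₂ ∈ Submodule.torsionBySet A M P,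
      r • e = x • e₁ + y • e₂ := by
  have hmem := fun (c : A) {e : M} (he : e ∈ Submodule.torsionBySet A M P) =>
    Submodule.smul_mem (Submodule.torsionBySet A M P) c he
  have hre : (x * y) ^ n • r • e = a • x ^ (n + 1) • e + b • y ^ (n + 1) • e := by
    have := (Submodule.mem_torsionBySet_iff _ _).mp he ⟨_, hr⟩
    rw [Subtype.coe_mk, sub_smul, sub_eq_zero] at this
    simpa [add_smul, mul_smul] using this
  -- modulo `x ^ n` this reads `y ^ (n + 1) • b • e = 0`, so `b • e` is divisible by `x ^ n`
  obtain ⟨e₂, he₂, hbe⟩ := exists_eq_pow_smul_of_sop hu hv hx n (n + 1) (hK n (n + 1))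
    (w := y ^ n • r • e - a • x • e) (w' := b • e)
    (Submodule.sub_mem _ (hmem _ (hmem _ he)) (hmem _ (hmem _ he))) (hmem _ he) (by
      rw [smul_sub, sub_eq_iff_eq_add, ← mul_smul, ← mul_pow, hre]
      module)
  have h1 : y ^ n • (r • e - y • e₂) = x ^ 1 • a • e := by
    rw [← sub_eq_zero]
    refine eq_zero_of_pow_smul_eq_zero hx n _ (Submodule.sub_mem _ (hmem _
      (Submodule.sub_mem _ (hmem _ he) (hmem _ he₂))) (hmem _ (hmem _ he))) ?_
    have h2 : x ^ n • (y ^ n • (r • e - y • e₂) - x ^ 1 • a • e) =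
        (x * y) ^ n • r • e - y ^ (n + 1) • x ^ n • e₂ - a • x ^ (n + 1) • e := by
      module
    rw [h2, hre, ← hbe]
    module
  -- likewise `x • a • e` is divisible by `y ^ n`, hence so is `a • e`
  obtain ⟨e₁, he₁, hae⟩ := exists_eq_pow_smul_of_sop hu hv hy n 1
    (by rw [Set.pair_comm]; exact hK 1 n)
    (Submodule.sub_mem _ (hmem _ he) (hmem _ he₂)) (hmem _ he) h1
  refine ⟨e₁, he₁, e₂, he₂, ?_⟩
  rw [← sub_eq_zero]
  refine eq_zero_of_pow_smul_eq_zero hy n _ (Submodule.sub_mem _ (hmem _ he)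
    (Submodule.add_mem _ (hmem _ he₁) (hmem _ he₂))) ?_
  have h3 : y ^ n • (r • e - (x • e₁ + y • e₂)) =
      y ^ n • (r • e - y • e₂) - x ^ 1 • y ^ n • e₁ := by module
  rw [h3, h1, ← hae, sub_self]

end Core


/-! ### Polynomials witnessing integrality over an ideal -/

section IntegralPolynomials

open Polynomial

/-- A monic polynomial of degree `d` whose coefficient of `X ^ k` lies in `I ^ (d - k)`; the
elements integral over `I` are the roots of such polynomials. -/
def IsIntegralPoly {R : Type*} [CommRing R] (I : Ideal R) (q : R[X]) : Prop :=
  q.Monic ∧ ∀ k, q.coeff k ∈ I ^ (q.natDegree - k)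

variable {R : Type*} [CommRing R] {I : Ideal R}

theorem IsIntegralPoly.one : IsIntegralPoly I (1 : R[X]) :=
  ⟨monic_one, fun k => by simp⟩

theorem IsIntegralPoly.mul {p q : R[X]} (hp : IsIntegralPoly I p) (hq : IsIntegralPoly I q) :
    IsIntegralPoly I (p * q) := by
  refine ⟨hp.1.mul hq.1, fun k => ?_⟩
  rw [hp.1.natDegree_mul hq.1, coeff_mul]
  refine Ideal.sum_mem _ fun ij hij => ?_
  have hk := Finset.HasAntidiagonal.mem_antidiagonal.mp hij
  refine Ideal.pow_le_pow_right (m := p.natDegree + q.natDegree - k)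
    (n := (p.natDegree - ij.1) + (q.natDegree - ij.2)) (by omega) ?_
  rw [pow_add]
  exact Ideal.mul_mem_mul (hp.2 _) (hq.2 _)

theorem IsIntegralPoly.pow {p : R[X]} (hp : IsIntegralPoly I p) (n : ℕ) :
    IsIntegralPoly I (p ^ n) := by
  induction n with
  | zero => simpa using IsIntegralPoly.one
  | succ n ih => rw [pow_succ]; exact ih.mul hp

theorem IsIntegralPoly.prod {ι : Type*} (s : Finset ι) {p : ι → R[X]}
    (hp : ∀ i ∈ s, IsIntegralPoly I (p i)) : IsIntegralPoly I (∏ i ∈ s, p i) :=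
  Finset.prod_induction _ _ (fun _ _ => IsIntegralPoly.mul) IsIntegralPoly.one hp

theorem IsIntegralPoly.map {S : Type*} [CommRing S] [Nontrivial S] {p : R[X]}
    (hp : IsIntegralPoly I p) (f : R →+* S) : IsIntegralPoly (I.map f) (p.map f) := by
  refine ⟨hp.1.map f, fun k => ?_⟩
  rw [hp.1.natDegree_map, coeff_map, ← Ideal.map_pow]
  exact Ideal.mem_map_of_mem f (hp.2 k)

theorem IsIntegralPoly.isIntegralOverIdeal [Nontrivial R] {q : R[X]} (hq : IsIntegralPoly I q)
    {r : R} (h0 : q.eval r = 0) : IsIntegralOverIdeal I r := by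
  have hpos : 0 < q.natDegree := by
    rw [Nat.pos_iff_ne_zero]
    intro h
    rw [hq.1.natDegree_eq_zero.mp h] at h0
    simp at h0
  refine ⟨q.natDegree, hpos, fun i => q.coeff (q.natDegree - i), fun i _ hi => ?_, ?_⟩
  · have := hq.2 (q.natDegree - i)
    rwa [Nat.sub_sub_self hi] at this
  · rw [eval_eq_sum_range, Finset.sum_range_succ, hq.1.coeff_natDegree, one_mul, add_comm,
      ← Finset.sum_range_reflect] at h0
    rw [← h0, ← Finset.Ico_add_one_right_eq_Icc, Finset.sum_Ico_eq_sum_range,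
      Nat.add_sub_cancel]
    simp_rw [Nat.sub_sub]

/-- Integrality over an ideal may be tested modulo the minimal primes. -/
theorem isIntegralOverIdeal_of_minimalPrimes [IsNoetherianRing R] [Nontrivial R] {r : R}
    (h : ∀ p ∈ minimalPrimes R, ∃ q : R[X], IsIntegralPoly I q ∧ q.eval r ∈ p) :
    IsIntegralOverIdeal I r := by
  choose! q hq hqr using h
  have hfin := minimalPrimes.finite_of_isNoetherianRing R
  have hnil : IsNilpotent ((∏ p ∈ hfin.toFinset, q p).eval r) := by
    rw [nilpotent_iff_mem_prime]
    intro J hJ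
    obtain ⟨p, hp, hpJ⟩ := Ideal.exists_minimalPrimes_le (I := (⊥ : Ideal R)) (J := J) bot_le
    rw [eval_prod]
    exact Ideal.mem_of_dvd _ (Finset.dvd_prod_of_mem (fun p => (q p).eval r)
      (hfin.mem_toFinset.mpr hp)) (hpJ (hqr p hp))
  obtain ⟨n, hn⟩ := hnil
  refine ((IsIntegralPoly.prod hfin.toFinset fun p hp => hq p
    (hfin.mem_toFinset.mp hp)).pow n).isIntegralOverIdeal (r := r) ?_
  rw [eval_pow, hn]

end IntegralPolynomials

/-! ### Ingredients specific to dimension two -/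

section Assembly

open Polynomial

/-- The determinant trick on the submodule of elements killed by an associated prime `P`. -/
theorem exists_isIntegralPoly_eval_mem {A : Type u} [CommRing A] [IsNoetherianRing A]
    {M : Type u} [AddCommGroup M] [Module A M] [Module.Finite A M] {P : Ideal A}
    (hP : IsAssociatedPrime P M) {x y r : A}
    (h : ∀ e ∈ Submodule.torsionBySet A M P, ∃ e₁ ∈ Submodule.torsionBySet A M P,
      ∃ e₂ ∈ Submodule.torsionBySet A M P, r • e = x • e₁ + y • e₂) :
    ∃ q : A[X], IsIntegralPoly (Ideal.span {x, y}) q ∧ q.eval r ∈ P := by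
  obtain ⟨-, c, hc⟩ := isAssociatedPrime_iff.mp hP
  have hcN : c ∈ Submodule.torsionBySet A M P := by
    rw [Submodule.mem_torsionBySet_iff]
    rintro ⟨a, ha⟩
    have : a ∈ (⊥ : Submodule A M).colon {c} := hc ▸ ha
    simpa [Submodule.mem_colon_singleton] using this
  obtain ⟨q, hq, -, hcoeff, hq0⟩ :=
    LinearMap.exists_monic_and_natDegree_eq_and_coeff_mem_pow_and_aeval_eq_zero A
      (algebraMap A (Module.End A (Submodule.torsionBySet A M P)) r) (Ideal.span {x, y}) (by
        rintro _ ⟨⟨e, he⟩, rfl⟩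
        obtain ⟨e₁, he₁, e₂, he₂, h12⟩ := h e he
        have : algebraMap A (Module.End A (Submodule.torsionBySet A M P)) r ⟨e, he⟩ =
            x • (⟨e₁, he₁⟩ : Submodule.torsionBySet A M P) +
              y • (⟨e₂, he₂⟩ : Submodule.torsionBySet A M P) := Subtype.ext h12
        rw [this]
        exact Submodule.add_mem _
          (Submodule.smul_mem_smul (Ideal.subset_span (by simp)) trivial)
          (Submodule.smul_mem_smul (Ideal.subset_span (by simp)) trivial))
  refine ⟨q, ⟨hq, hcoeff⟩, ?_⟩
  rw [Polynomial.aeval_algebraMap_apply] at hq0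
  have := congrArg Subtype.val (LinearMap.congr_fun hq0 ⟨c, hcN⟩)
  rw [hc, Submodule.mem_colon_singleton, Submodule.mem_bot]
  simpa using this

/-- By Krull's principal ideal theorem, a member of a system of parameters of length two avoids
every prime of dimension two. -/
theorem notMem_of_radical_span_pair {R : Type*} [CommRing R] [IsNoetherianRing R] [IsLocalRing R]
    {x y : R} (hxy : (Ideal.span {x, y}).radical = maximalIdeal R) {p : Ideal R} [p.IsPrime]
    (hp : ringKrullDim (R ⧸ p) = 2) : x ∉ p := by
  intro hx
  have := IsLocalRing.of_surjective' (Ideal.Quotient.mk p) Ideal.Quotient.mk_surjective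
  have hloc := IsLocalHom.of_surjective (Ideal.Quotient.mk p) Ideal.Quotient.mk_surjective
  have hy : y ∈ maximalIdeal R := hxy ▸ Ideal.le_radical (Ideal.subset_span (by simp))
  have hmin : maximalIdeal (R ⧸ p) ∈ (Ideal.span {Ideal.Quotient.mk p y}).minimalPrimes := by
    refine ⟨⟨inferInstance, ?_⟩, fun q hq _ => ?_⟩
    · rw [Ideal.span_singleton_le_iff_mem]
      exact map_nonunit _ _ hy
    · have hqp := hq.1
      have hle : maximalIdeal R ≤ q.comap (Ideal.Quotient.mk p) := by
        rw [← hxy]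
        refine (Ideal.IsPrime.radical_le_iff inferInstance).mpr ?_
        rw [Ideal.span_le]
        rintro z (rfl | rfl)
        · simp [Ideal.Quotient.eq_zero_iff_mem.mpr hx]
        · exact hq.2 (Ideal.subset_span rfl)
      intro d hd
      obtain ⟨d, rfl⟩ := Ideal.Quotient.mk_surjective d
      exact hle (((local_hom_TFAE (Ideal.Quotient.mk p)).out 0 4).mp hloc ▸ hd)
  have h1 := Ideal.height_le_one_of_isPrincipal_of_mem_minimalPrimes _ _ hmin
  have h2 := IsLocalRing.maximalIdeal_height_eq_ringKrullDim (R := R ⧸ p)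
  rw [hp] at h2
  have h3 : ((maximalIdeal (R ⧸ p)).height : WithBot ℕ∞) ≤ 1 := by exact_mod_cast h1
  rw [h2] at h3
  norm_cast at h3

theorem hasDepthGE_self_of_isRegular {A : Type u} [CommRing A] [IsLocalRing A] {rs : List A}
    (h : RingTheory.Sequence.IsRegular A rs) : HasDepthGE A rs.length A := by
  refine ⟨rs, rfl, fun r hr => ?_, h⟩
  refine IsLocalRing.le_maximalIdeal (J := Ideal.ofList rs) (fun htop => h.top_ne_smul ?_)
    (Ideal.subset_span hr)
  rw [htop, Submodule.top_smul]

theorem mem_limitClosure_pair {R : Type*} [CommRing R] {x y r : R}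
    (hr : r ∈ limitClosure (M := R) ![x, y]) :
    ∃ n : ℕ, ∃ a b : R, (x * y) ^ n * r = a * x ^ (n + 1) + b * y ^ (n + 1) := by
  have key : ∀ n : ℕ, ∀ r : R,
      r ∈ (Ideal.span (Set.range fun i => ![x, y] i ^ (n + 2)) • (⊤ : Submodule R R)).comap
        (LinearMap.lsmul R R ((∏ i, ![x, y] i) ^ (n + 1))) ↔
      ∃ a b : R, a * x ^ (n + 2) + b * y ^ (n + 2) = (x * y) ^ (n + 1) * r := by
    intro n r
    have : (Set.range fun i => ![x, y] i ^ (n + 2)) = {x ^ (n + 2), y ^ (n + 2)} := by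
      ext z
      simp [Fin.exists_fin_two, eq_comm]
    rw [this, Submodule.mem_comap, smul_eq_mul, Ideal.mul_top, Ideal.mem_span_pair]
    simp
  rw [limitClosure, Submodule.mem_iSup_of_directed] at hr
  · obtain ⟨n, hn⟩ := hr
    obtain ⟨a, b, hab⟩ := (key n r).mp hn
    exact ⟨n + 1, a, b, hab.symm⟩
  · refine (monotone_nat_of_le_succ fun n r hr => ?_).directed_le
    obtain ⟨a, b, hab⟩ := (key n r).mp hr
    refine (key (n + 1) r).mpr ⟨a * y, b * x, ?_⟩
    linear_combination (x * y) * hab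

end Assembly

/-- Let `(R, m)` be an equidimensional Noetherian local ring of dimension two which is an
image of a Cohen–Macaulay local ring, and let `x, y` be a system of parameters of `R`.
Then `(x, y)^lim` is contained in the integral closure of `(x, y)`. -/
theorem limitClosure_le_integralClosure_dim_two
    {R : Type*} [CommRing R] [IsNoetherianRing R] [IsLocalRing R]
    (hdim : ringKrullDim R = 2) (hequi : IsEquidimensionalRing R)
    (A : Type*) [CommRing A] [IsNoetherianRing A] [IsLocalRing A]
    (hACM : IsCohenMacaulayRing A) (f : A →+* R) (hf : Function.Surjective f)
    (x y : R) (hxy : IsSOP R ![x, y]) :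
    ∀ r ∈ limitClosure (M := R) ![x, y],
      IsIntegralOverIdeal (Ideal.span {x, y}) r := by
  intro r hr
  have hrad : (Ideal.span {x, y}).radical = maximalIdeal R := by
    have := hxy.2
    rwa [Matrix.range_cons, Matrix.range_cons, Matrix.range_empty, Set.union_empty,
      Set.singleton_union] at this
  obtain ⟨n, a, b, hab⟩ := mem_limitClosure_pair hr
  obtain ⟨x, rfl⟩ := hf x
  obtain ⟨y, rfl⟩ := hf y
  obtain ⟨r, rfl⟩ := hf r
  obtain ⟨a, rfl⟩ := hf a
  obtain ⟨b, rfl⟩ := hf b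
  refine isIntegralOverIdeal_of_minimalPrimes fun p hp => ?_
  have hpp : p.IsPrime := hp.1.1
  have hp2 : ringKrullDim (R ⧸ p) = 2 := (hequi p hp).trans hdim
  let P : Ideal A := p.comap f
  have hP2 : ringKrullDim (A ⧸ P) = 2 := by
    rw [← hp2]
    exact ringKrullDim_eq_of_ringEquiv (RingEquiv.ofBijective
      (Ideal.quotientMap p f le_rfl)
      ⟨Ideal.quotientMap_injective, Ideal.quotientMap_surjective hf⟩)
  have hkerP : RingHom.ker f ≤ P := Ideal.comap_mono bot_le
  obtain ⟨rs, hrs, hlen⟩ := hACM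
  obtain ⟨k, M, _, _, hfin, hdepth, hass⟩ := exists_depth_two_module rs.length A
    (hasDepthGE_self_of_isRegular hrs)
    (by rw [Module.supportDim_self_eq_ringKrullDim, hlen]) P
    (by
      rw [Module.mem_support_iff_exists_annihilator]
      refine ⟨1, fun c hc => ?_⟩
      have hc0 : c • (1 : A) = 0 := (Submodule.mem_annihilator_span_singleton 1 c).mp hc
      rw [smul_eq_mul, mul_one] at hc0
      exact hc0 ▸ P.zero_mem) hP2
  obtain ⟨u, hu, v, hv, hureg, hvreg⟩ := hdepth.exists_regular_pair
  -- an element outside `P` killing a nonzero `e` would produce an associated prime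
  -- strictly larger than `P`, hence of dimension at most one
  have htf : ∀ z : A, z ∉ P → ∀ e ∈ Submodule.torsionBySet A M P, z • e = 0 → e = 0 := by
    intro z hz e he hze
    by_contra he0
    obtain ⟨Q, hQ, hle⟩ := exists_le_isAssociatedPrime_of_isNoetherianRing A e he0
    have hlt : P < Q := by
      refine SetLike.lt_iff_le_and_exists.mpr ⟨fun c hc => hle ?_, z, hle ?_, hz⟩
      · rw [Submodule.mem_colon_singleton, Submodule.mem_bot]
        exact (Submodule.mem_torsionBySet_iff _ _).mp he ⟨c, hc⟩
      · rwa [Submodule.mem_colon_singleton, Submodule.mem_bot]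
    have h1 := ringKrullDim_quotient_succ_le_of_lt hlt
    have h2 := hdepth.le_ringKrullDim_quotient hQ
    rw [hP2] at h1
    have h3 := h2.trans (withBot_le_of_succ_le (n := 1)
      (by simpa [one_add_one_eq_two] using h1))
    norm_cast at h3
  have hloc := IsLocalHom.of_surjective f hf
  have hK : ∀ i j, ∃ K, ∀ w ∈ maximalIdeal A, w ^ K ∈ Ideal.span {x ^ i, y ^ j} ⊔ P := by
    intro i j
    have hle : maximalIdeal R ≤ (Ideal.span {f x ^ i, f y ^ j}).radical := by
      rw [← hrad, Ideal.radical_le_radical_iff, Ideal.span_le]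
      rintro z (rfl | rfl)
      · exact ⟨i, Ideal.subset_span (by simp)⟩
      · exact ⟨j, Ideal.subset_span (by simp)⟩
    obtain ⟨K, hK⟩ := Ideal.exists_pow_le_of_le_radical_of_fg hle (IsNoetherian.noetherian _)
    refine ⟨K, fun w hw => ?_⟩
    have hfw : f w ^ K ∈ Ideal.span {f x ^ i, f y ^ j} :=
      hK (Ideal.pow_mem_pow (map_nonunit f w hw) K)
    obtain ⟨α, β, hαβ⟩ := Ideal.mem_span_pair.mp hfw
    obtain ⟨α, rfl⟩ := hf α
    obtain ⟨β, rfl⟩ := hf β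
    refine Submodule.mem_sup.mpr ⟨α * x ^ i + β * y ^ j, Ideal.mem_span_pair.mpr ⟨α, β, rfl⟩,
      w ^ K - (α * x ^ i + β * y ^ j), hkerP ?_, by ring⟩
    rw [RingHom.mem_ker]
    simp [hαβ]
  have hxP : x ∉ P := notMem_of_radical_span_pair (x := f x) (y := f y) (p := p) hrad hp2
  have hyP : y ∉ P :=
    notMem_of_radical_span_pair (x := f y) (y := f x) (p := p) (by rwa [Set.pair_comm]) hp2
  obtain ⟨q, hq, hqr⟩ := exists_isIntegralPoly_eval_mem hass (x := x) (y := y) (r := r)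
    fun e he => smul_mem_of_limit hureg hvreg
      (htf x hxP) (htf y hyP)
      (fun i j => (hK i j).imp fun K hK => ⟨hK u hu, hK v hv⟩) (n := n) (a := a) (b := b)
      (hkerP (by rw [RingHom.mem_ker]; simp [hab])) he
  refine ⟨q.map f, ?_, ?_⟩
  · have := hq.map f
    rwa [Ideal.map_span, Set.image_pair] at this
  · rw [Polynomial.eval_map_apply]
    exact hqr
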